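/- For every real α ≥ 0 and every β ≥ 0, one has ∫_{−arctan β}^{π/2} ((β + tan θ)² − (α+1)(1 − β tan θ)²) (cos θ)^{α+2} dθ = β (β²+1)^{−α/2} − α ∫_{−arctan β}^{π/2} (cos θ)^α dθ. -/

import Mathlib

open MeasureTheory Real

/-!
With `s = sin θ` and `c = cos θ`, the integrand is
`((β c + s)² - (α + 1) (c - β s)²) c ^ α`. Adding `α c ^ α = α (s² + c²) c ^ α` turns it into
`(β² - 1) (c² - (α + 1) s²) c ^ α + 2 (α + 2) β s c ^ (α + 1)`, which is the derivative of
`(β² - 1) s c ^ (α + 1) - 2 β c ^ (α + 2)`. This primitive vanishes at `π / 2`, and at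
`-arctan β`, where `s = -β c` and `(β² + 1) c² = 1`, it equals `-β c ^ α`.
-/

open Set intervalIntegral

variable {α a b θ : ℝ}

lemma cos_pos_of_mem_uIoo (ha : a ∈ Icc (-(π / 2)) (π / 2)) (hb : b ∈ Icc (-(π / 2)) (π / 2))
    (hθ : θ ∈ uIoo a b) : 0 < cos θ :=
  cos_pos_of_mem_Ioo ⟨(le_min ha.1 hb.1).trans_lt hθ.1, hθ.2.trans_le (max_le ha.2 hb.2)⟩

lemma continuous_cos_rpow (hα : 0 ≤ α) : Continuous fun θ ↦ cos θ ^ α :=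
  continuous_cos.rpow_const fun _ ↦ .inr hα

lemma hasDerivAt_neg_cos_rpow_add_one (hθ : cos θ ≠ 0) :
    HasDerivAt (fun θ ↦ -cos θ ^ (α + 1)) ((α + 1) * (sin θ * cos θ ^ α)) θ := by
  refine ((hasDerivAt_cos θ).rpow_const (p := α + 1) (.inl hθ)).neg.congr_deriv ?_
  rw [add_sub_cancel_right]
  ring

lemma hasDerivAt_sin_mul_cos_rpow_add_one (hθ : 0 < cos θ) :
    HasDerivAt (fun θ ↦ sin θ * cos θ ^ (α + 1))
      ((cos θ ^ 2 - (α + 1) * sin θ ^ 2) * cos θ ^ α) θ := by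
  have hcos := (hasDerivAt_cos θ).rpow_const (p := α + 1) (.inl hθ.ne')
  refine ((hasDerivAt_sin θ).mul hcos).congr_deriv ?_
  rw [add_sub_cancel_right, rpow_add_one hθ.ne']
  ring

lemma intervalIntegrable_sin_mul_cos_rpow_zero_pi_div_two (hα : -1 < α) :
    IntervalIntegrable (fun θ ↦ sin θ * cos θ ^ α) volume 0 (π / 2) := by
  have hpos : 0 < α + 1 := by linarith
  have hmem {θ : ℝ} (hθ : θ ∈ Ioo (min 0 (π / 2)) (max 0 (π / 2))) : θ ∈ Ioo 0 (π / 2) := by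
    simpa only [min_eq_left pi_div_two_pos.le, max_eq_right pi_div_two_pos.le] using hθ
  have hcos {θ : ℝ} (hθ : θ ∈ Ioo 0 (π / 2)) : 0 < cos θ :=
    cos_pos_of_mem_Ioo ⟨by linarith [hθ.1, pi_pos], hθ.2⟩
  have hderiv : IntervalIntegrable (fun θ ↦ (α + 1) * (sin θ * cos θ ^ α)) volume 0 (π / 2) := by
    refine intervalIntegrable_deriv_of_nonneg (continuous_cos_rpow hpos.le).neg.continuousOn
      (fun θ hθ ↦ hasDerivAt_neg_cos_rpow_add_one (hcos (hmem hθ)).ne') fun θ hθ ↦ ?_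
    have hsin : 0 ≤ sin θ :=
      sin_nonneg_of_nonneg_of_le_pi (hmem hθ).1.le (by linarith [(hmem hθ).2, pi_pos])
    have := hcos (hmem hθ)
    positivity
  simpa only [inv_mul_cancel_left₀ hpos.ne'] using hderiv.const_mul (α + 1)⁻¹

lemma intervalIntegrable_cos_rpow (hα : -1 < α) (ha : a ∈ Icc (-(π / 2)) (π / 2))
    (hb : b ∈ Icc (-(π / 2)) (π / 2)) :
    IntervalIntegrable (fun θ ↦ cos θ ^ α) volume a b := by
  -- For `α < 0` the singularity at `π / 2` is handled by
  -- `cos θ ^ α = sin θ * (sin θ * cos θ ^ α) + cos θ ^ (α + 2)`, where `sin θ * cos θ ^ α` is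
  -- integrable, being up to a constant the derivative of a monotone function.
  have hhalf : IntervalIntegrable (fun θ ↦ cos θ ^ α) volume 0 (π / 2) := by
    have hsum : IntervalIntegrable (fun θ ↦ sin θ * (sin θ * cos θ ^ α) + cos θ ^ (α + 2))
        volume 0 (π / 2) :=
      ((intervalIntegrable_sin_mul_cos_rpow_zero_pi_div_two hα).continuousOn_mul
        continuous_sin.continuousOn).add
        ((continuous_cos_rpow (by linarith)).intervalIntegrable _ _)
    refine hsum.congr_uIoo fun θ hθ ↦ ?_
    have hcos : 0 < cos θ := cos_pos_of_mem_uIoo ⟨by linarith [pi_pos], pi_div_two_pos.le⟩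
      ⟨by linarith [pi_pos], le_rfl⟩ hθ
    simp only [rpow_add hcos, rpow_two]
    linear_combination cos θ ^ α * sin_sq_add_cos_sq θ
  have hhalf_neg : IntervalIntegrable (fun θ ↦ cos θ ^ α) volume (-(π / 2)) 0 := by
    simpa only [cos_neg, neg_zero] using
      ((IntervalIntegrable.iff_comp_neg (f := fun θ ↦ cos θ ^ α)).mp hhalf).symm
  refine (hhalf_neg.trans hhalf).mono_set (uIcc_subset_uIcc ?_ ?_) <;>
    rwa [uIcc_of_le (by linarith [pi_pos])]

lemma integral_sin_mul_cos_rpow (hα : -1 < α) (ha : a ∈ Icc (-(π / 2)) (π / 2))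
    (hb : b ∈ Icc (-(π / 2)) (π / 2)) :
    ∫ θ in a..b, sin θ * cos θ ^ α = (cos a ^ (α + 1) - cos b ^ (α + 1)) / (α + 1) := by
  have hpos : 0 < α + 1 := by linarith
  have hint : IntervalIntegrable (fun θ ↦ (α + 1) * (sin θ * cos θ ^ α)) volume a b :=
    ((intervalIntegrable_cos_rpow hα ha hb).continuousOn_mul
      continuous_sin.continuousOn).const_mul _
  have hFTC := integral_eq_sub_of_hasDeriv_right (f := fun θ ↦ -cos θ ^ (α + 1))
    (continuous_cos_rpow hpos.le).neg.continuousOn (fun θ hθ ↦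
      (hasDerivAt_neg_cos_rpow_add_one (cos_pos_of_mem_uIoo ha hb hθ).ne').hasDerivWithinAt) hint
  rw [intervalIntegral.integral_const_mul] at hFTC
  rw [eq_div_iff hpos.ne']
  linear_combination hFTC

lemma intervalIntegrable_cos_sq_sub_mul_sin_sq_mul_cos_rpow (hα : -1 < α)
    (ha : a ∈ Icc (-(π / 2)) (π / 2)) (hb : b ∈ Icc (-(π / 2)) (π / 2)) :
    IntervalIntegrable (fun θ ↦ (cos θ ^ 2 - (α + 1) * sin θ ^ 2) * cos θ ^ α) volume a b :=
  (intervalIntegrable_cos_rpow hα ha hb).continuousOn_mul (by fun_prop)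

lemma integral_cos_sq_sub_mul_sin_sq_mul_cos_rpow (hα : -1 < α)
    (ha : a ∈ Icc (-(π / 2)) (π / 2)) (hb : b ∈ Icc (-(π / 2)) (π / 2)) :
    ∫ θ in a..b, (cos θ ^ 2 - (α + 1) * sin θ ^ 2) * cos θ ^ α =
      sin b * cos b ^ (α + 1) - sin a * cos a ^ (α + 1) :=
  integral_eq_sub_of_hasDeriv_right
    (continuous_sin.mul (continuous_cos_rpow (by linarith))).continuousOn
    (fun _ hθ ↦ (hasDerivAt_sin_mul_cos_rpow_add_one
      (cos_pos_of_mem_uIoo ha hb hθ)).hasDerivWithinAt)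
    (intervalIntegrable_cos_sq_sub_mul_sin_sq_mul_cos_rpow hα ha hb)

lemma tan_quadratic_mul_cos_rpow_add_two (α β : ℝ) (hθ : 0 < cos θ) :
    ((β + tan θ) ^ 2 - (α + 1) * (1 - β * tan θ) ^ 2) * cos θ ^ (α + 2) =
      (β ^ 2 - 1) * ((cos θ ^ 2 - (α + 1) * sin θ ^ 2) * cos θ ^ α) +
        2 * (α + 2) * β * (sin θ * cos θ ^ (α + 1)) - α * cos θ ^ α := by
  have hsin : sin θ = tan θ * cos θ := (tan_mul_cos hθ.ne').symm
  have hsq := sin_sq_add_cos_sq θ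
  rw [rpow_add hθ, rpow_two, rpow_add_one hθ.ne']
  rw [hsin] at hsq ⊢
  linear_combination -(α * cos θ ^ α) * hsq

lemma integral_tan_quadratic_mul_cos_rpow_add_two (β : ℝ) (hα : -1 < α)
    (ha : a ∈ Icc (-(π / 2)) (π / 2)) (hb : b ∈ Icc (-(π / 2)) (π / 2)) :
    ∫ θ in a..b, ((β + tan θ) ^ 2 - (α + 1) * (1 - β * tan θ) ^ 2) * cos θ ^ (α + 2) =
      (β ^ 2 - 1) * (sin b * cos b ^ (α + 1) - sin a * cos a ^ (α + 1)) -
        2 * β * (cos b ^ (α + 2) - cos a ^ (α + 2)) - α * ∫ θ in a..b, cos θ ^ α := by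
  have hquad := (intervalIntegrable_cos_sq_sub_mul_sin_sq_mul_cos_rpow hα ha hb).const_mul
    (β ^ 2 - 1)
  have hsin : IntervalIntegrable (fun θ ↦ 2 * (α + 2) * β * (sin θ * cos θ ^ (α + 1)))
      volume a b :=
    (continuous_const.mul (continuous_sin.mul
      (continuous_cos_rpow (by linarith)))).intervalIntegrable _ _
  have hcos := (intervalIntegrable_cos_rpow hα ha hb).const_mul α
  have hα2 : α + 2 ≠ 0 := by linarith
  rw [integral_congr_uIoo fun θ hθ ↦
      tan_quadratic_mul_cos_rpow_add_two α β (cos_pos_of_mem_uIoo ha hb hθ),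
    integral_sub (hquad.add hsin) hcos, integral_add hquad hsin,
    intervalIntegral.integral_const_mul, intervalIntegral.integral_const_mul,
    intervalIntegral.integral_const_mul, integral_cos_sq_sub_mul_sin_sq_mul_cos_rpow hα ha hb,
    integral_sin_mul_cos_rpow (by linarith) ha hb, add_assoc α 1 1, one_add_one_eq_two]
  field_simp
  ring

lemma sin_arctan_eq_mul_cos_arctan (x : ℝ) : sin (arctan x) = x * cos (arctan x) := by
  rw [← tan_mul_cos (cos_arctan_pos x).ne', tan_arctan]

lemma cos_arctan_rpow (x p : ℝ) : cos (arctan x) ^ p = (x ^ 2 + 1) ^ (-(p / 2)) := by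
  have hx : 0 ≤ x ^ 2 + 1 := by positivity
  rw [cos_arctan, add_comm, one_div, sqrt_eq_rpow, ← rpow_neg hx, ← rpow_mul hx]
  ring_nf

theorem stmt8_general (α β : ℝ) (hα : -1 < α) :
    ∫ θ in (-arctan β)..(π / 2),
        ((β + tan θ) ^ 2 - (α + 1) * (1 - β * tan θ) ^ 2) * cos θ ^ (α + 2) =
      β * (β ^ 2 + 1) ^ (-(α / 2)) - α * ∫ θ in (-arctan β)..(π / 2), cos θ ^ α := by
  have hmem : -arctan β ∈ Icc (-(π / 2)) (π / 2) :=
    arctan_neg β ▸ Ioo_subset_Icc_self (arctan_mem_Ioo (-β))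
  have hcos := cos_arctan_pos β
  have hsq : cos (arctan β) ^ 2 * (β ^ 2 + 1) = 1 := by
    rw [cos_sq_arctan, add_comm, one_div_mul_cancel (by positivity)]
  rw [integral_tan_quadratic_mul_cos_rpow_add_two β hα hmem ⟨by linarith [pi_pos], le_rfl⟩,
    cos_pi_div_two, zero_rpow (by linarith), zero_rpow (by linarith), sin_neg, cos_neg,
    sin_arctan_eq_mul_cos_arctan, rpow_add_one hcos.ne', rpow_add hcos, rpow_two,
    ← cos_arctan_rpow]
  linear_combination β * cos (arctan β) ^ α * hsq

theorem stmt8 (α β : ℝ) (hα : 0 ≤ α) (hβ : 0 ≤ β) :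
    ∫ θ in (-Real.arctan β)..(Real.pi / 2),
        ((β + Real.tan θ) ^ 2 - (α + 1) * (1 - β * Real.tan θ) ^ 2) * Real.cos θ ^ (α + 2) =
      β * (β ^ 2 + 1) ^ (-(α / 2)) -
        α * ∫ θ in (-Real.arctan β)..(Real.pi / 2), Real.cos θ ^ α :=
  stmt8_general α β (by linarith)
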